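/- For a finite sequence a of real numbers, pan(pan(a)) = a if and only if a is a self-modified ascent sequence. -/

import Mathlib

def ascents (l : List ℕ) : ℕ :=
  ((l.zip l.tail).filter (fun p => p.1 < p.2)).length

def IsAscSeq (l : List ℕ) : Prop :=
  l.getD 0 0 = 0 ∧
  ∀ k, k < l.length → 0 < k → l.getD k 0 ≤ ascents (l.take k) + 1

def IsRGF (l : List ℕ) : Prop :=
  l.getD 0 0 = 0 ∧
  ∀ k, k < l.length → ∀ j, l.getD k 0 = j + 1 → ∃ i, i < k ∧ l.getD i 0 = j

def SelfModified (l : List ℕ) : Prop :=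
  IsAscSeq l ∧
  ∀ k, k < l.length → 0 < k →
    l.getD k 0 ≤ l.getD (k - 1) 0 ∨ l.getD k 0 = ascents (l.take k) + 1

def Contains101 (l : List ℕ) : Prop :=
  ∃ i j k, i < j ∧ j < k ∧ k < l.length ∧
    l.getD i 0 = l.getD k 0 ∧ l.getD j 0 < l.getD k 0

def Contains0101 (l : List ℕ) : Prop :=
  ∃ i j k m, i < j ∧ j < k ∧ k < m ∧ m < l.length ∧
    l.getD i 0 = l.getD k 0 ∧ l.getD j 0 = l.getD m 0 ∧ l.getD i 0 < l.getD j 0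

def Contains1010 (l : List ℕ) : Prop :=
  ∃ i j k m, i < j ∧ j < k ∧ k < m ∧ m < l.length ∧
    l.getD i 0 = l.getD k 0 ∧ l.getD j 0 = l.getD m 0 ∧ l.getD j 0 < l.getD i 0

/-- The view of position `i` in the sequence `a`: the number of indices `j > i` such
that `a j` strictly exceeds all entries `a k` for `i ≤ k < j`.  This agrees with the
recursive definition `v i = v j + 1` for `j` the least index `> i` with `a j > a i`. -/
def view {α : Type*} [LinearOrder α] [Inhabited α] (a : List α) (i : ℕ) : ℕ :=
  ((List.range a.length).filter (fun j =>
    decide (i < j ∧ ∀ k, k < j → i ≤ k → a.getD k default < a.getD j default))).length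

/-- The panorama of `a`: the views of the positions of `a`, listed grouped by entry
value from largest value to smallest, positions within a group in increasing order. -/
def pan {α : Type*} [LinearOrder α] [Inhabited α] (a : List α) : List ℕ :=
  ((List.range a.length).mergeSort (fun i j =>
    decide (a.getD j default < a.getD i default ∨
      (a.getD i default = a.getD j default ∧ i ≤ j)))).map (view a)

/-- A square matrix of natural numbers, given by a dimension and an entry function
(indices are 0-based; entries with an index `≥ d` are irrelevant/zero). -/
structure FMat where
  d : ℕ
  entry : ℕ → ℕ → ℕ

/-- 0-based index of the first row whose rightmost entry is nonzero. -/
noncomputable def mindex (M : FMat) : ℕ :=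
  sInf {i | M.entry i (M.d - 1) ≠ 0}

/-- One step of the recursive bijection from ascent sequences to Fishburn matrices,
with cases AM1, AM2, AM3 (0-based indices). -/
noncomputable def fStep (M : FMat) (a : ℕ) : FMat :=
  if a ≤ mindex M then
    -- AM1: increase entry (a, d-1)
    ⟨M.d, fun i j => M.entry i j + if i = a ∧ j = M.d - 1 then 1 else 0⟩
  else if a = M.d then
    -- AM2: append a new row and column, with 1 in the new diagonal entry
    ⟨M.d + 1, fun i j =>
      if i = M.d ∨ j = M.d then (if i = M.d ∧ j = M.d then 1 else 0)
      else M.entry i j⟩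
  else
    -- AM3: insert a new row and column at index a
    ⟨M.d + 1, fun i j =>
      if i = a then (if j = M.d then 1 else 0)
      else if j = a then (if i < a then M.entry i (M.d - 1) else 0)
      else if j = M.d ∧ i < a then 0
      else M.entry (if i < a then i else i - 1) (if j < a then j else j - 1)⟩

/-- The map from ascent sequences to Fishburn matrices. -/
noncomputable def fAM (l : List ℕ) : FMat :=
  l.tail.foldl fStep ⟨1, fun i j => if i = 0 ∧ j = 0 then 1 else 0⟩

/-- Fishburn matrix: upper triangular (and supported on `[0,d) × [0,d)`),
with no zero row and no zero column. -/
def IsFishburn (M : FMat) : Prop :=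
  (∀ i j, (M.d ≤ i ∨ M.d ≤ j ∨ j < i) → M.entry i j = 0) ∧
  (∀ i, i < M.d → ∃ j, j < M.d ∧ M.entry i j ≠ 0) ∧
  (∀ j, j < M.d → ∃ i, i < M.d ∧ M.entry i j ≠ 0)

def entrySum (M : FMat) : ℕ :=
  ∑ i ∈ Finset.range M.d, ∑ j ∈ Finset.range M.d, M.entry i j

/-- Reflection of a matrix through its antidiagonal. -/
def reflect (M : FMat) : FMat :=
  ⟨M.d, fun i j => if i < M.d ∧ j < M.d then M.entry (M.d - 1 - j) (M.d - 1 - i) else 0⟩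

/-- The canonical sequence `(0^{m₀₀}, 1^{m₁₁}, 0^{m₀₁}, 2^{m₂₂}, 1^{m₁₂}, 0^{m₀₂}, …)`
(0-based indices) associated to a matrix; this is `f_MA(M)` for `M ∈ RMatrices`. -/
def canonSeq (M : FMat) : List ℕ :=
  (List.range M.d).flatMap (fun j =>
    (List.range (j + 1)).reverse.flatMap (fun i => List.replicate (M.entry i j) i))

/-- The dual canonical sequence
`(0^{m_{d-1,d-1}}, 1^{m_{d-2,d-2}}, 0^{m_{d-2,d-1}}, …, (d-1)^{m_{0,0}}, …, 0^{m_{0,d-1}})`,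
i.e. `f_MA` applied to the antidiagonal reflection of `M`. -/
def dualCanonSeq (M : FMat) : List ℕ :=
  (List.range M.d).flatMap (fun j =>
    (List.range (j + 1)).reverse.flatMap (fun i =>
      List.replicate (M.entry (M.d - 1 - j) (M.d - 1 - i)) i))

/-- A matrix is SE-free if it has no pair of nonzero entries `m i j`, `m i' j'`
with `i < i'`, `j < j'` and `i' ≤ j`. -/
def SEFree (M : FMat) : Prop :=
  ¬ ∃ i j i' j', i < i' ∧ j < j' ∧ i' ≤ j ∧ j' < M.d ∧
    M.entry i j ≠ 0 ∧ M.entry i' j' ≠ 0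

/-- Generalized ballot sequence (Yamanouchi word): in every prefix, each value `j+1`
occurs at most as often as `j`. -/
def IsBallot (l : List ℕ) : Prop :=
  ∀ k j, (l.take k).count (j + 1) ≤ (l.take k).count j

/-!
A self-modified ascent sequence is one that can be cut into consecutive blocks numbered `0, …, m`
such that block `k` is weakly decreasing and starts with `k`. The view of an entry in block `g` is
then `m - g`. So, apart from reordering, `pan` sends an entry `v` in block `g` to the entry `m - g`
in block `m - v`, and the tie-breaking rule for positions makes this an involution.

Conversely, suppose `pan (pan a) = a`, and let `m` be the largest entry of `a`. The entries of
`pan a` are at most `m` and some position of `pan a` has view `m`, so all the values `0, …, m` occur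
in `pan a`. The views of the entries of `pan a` equal to `m - k` form block `k` of `a`, and the
maximum of this block is `k`. An entry of `a` in block `g` therefore has view at least `m - g`, and
summing over all entries turns this into an equality, which forces each block to be weakly
decreasing.
-/

open Finset OrderDual

section Records

variable {α β : Type*} [LinearOrder α] [LinearOrder β] {n : ℕ}

/-- The positions of the records of the tuple `x` seen from position `i`: those `j > i` at which
`x` exceeds all its entries in `[i, j)`. -/
def recordsAfter (x : Fin n → α) (i : Fin n) : Finset (Fin n) :=
  {j | i < j ∧ ∀ k, i ≤ k → k < j → x k < x j}

/-- The values of the records of the tuple `x` seen from position `i`. -/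
def recordValues (x : Fin n → α) (i : Fin n) : Finset α :=
  (recordsAfter x i).image x

/-- The view of position `i`, for sequences encoded as tuples rather than lists. -/
def tupleView (x : Fin n → α) (i : Fin n) : ℕ :=
  #(recordsAfter x i)

lemma mem_recordsAfter {x : Fin n → α} {i j : Fin n} :
    j ∈ recordsAfter x i ↔ i < j ∧ ∀ k, i ≤ k → k < j → x k < x j := by
  simp only [recordsAfter, mem_filter_univ]

lemma mem_recordValues {x : Fin n → α} {i : Fin n} {y : α} :
    y ∈ recordValues x i ↔ ∃ j ∈ recordsAfter x i, x j = y :=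
  mem_image

lemma strictMonoOn_recordsAfter (x : Fin n → α) (i : Fin n) :
    StrictMonoOn x (recordsAfter x i) := fun j hj _ hk hjk =>
  (mem_recordsAfter.1 hk).2 j (mem_recordsAfter.1 hj).1.le hjk

lemma card_recordValues (x : Fin n → α) (i : Fin n) : #(recordValues x i) = tupleView x i :=
  card_image_of_injOn (strictMonoOn_recordsAfter x i).injOn

lemma recordValues_of_mem_recordsAfter {x : Fin n → α} {i j : Fin n} (hj : j ∈ recordsAfter x i) :
    recordValues x j = {y ∈ recordValues x i | x j < y} := by
  obtain ⟨hij, hj_max⟩ := mem_recordsAfter.1 hj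
  ext y
  simp only [mem_filter, mem_recordValues]
  constructor
  · rintro ⟨k, hk, rfl⟩
    obtain ⟨hjk, hk_max⟩ := mem_recordsAfter.1 hk
    have hxjk : x j < x k := hk_max j le_rfl hjk
    refine ⟨⟨k, mem_recordsAfter.2 ⟨hij.trans hjk, fun l hil hlk => ?_⟩, rfl⟩, hxjk⟩
    rcases lt_or_ge l j with hlj | hjl
    · exact (hj_max l hil hlj).trans hxjk
    · exact hk_max l hjl hlk
  · rintro ⟨⟨k, hk, rfl⟩, hxjk⟩
    have hjk : j < k := ((strictMonoOn_recordsAfter x i).lt_iff_lt hj hk).1 hxjk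
    exact ⟨k, mem_recordsAfter.2
      ⟨hjk, fun l hjl => (mem_recordsAfter.1 hk).2 l (hij.le.trans hjl)⟩, rfl⟩

lemma exists_mem_recordsAfter_le {x : Fin n → α} {i j : Fin n} (hij : i ≤ j) (hx : x i < x j) :
    ∃ k ∈ recordsAfter x i, k ≤ j := by
  obtain ⟨k, hkj, ⟨hik, hxk⟩, hk_min⟩ :=
    exists_minimal_le_of_wellFoundedLT (fun k => i ≤ k ∧ x i < x k) j ⟨hij, hx⟩
  refine ⟨k, mem_recordsAfter.2 ⟨hik.lt_of_ne ?_, fun l hil hlk => ?_⟩, hkj⟩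
  · rintro rfl
    exact hxk.false
  · by_contra! hxl
    exact (hk_min ⟨hil, hxk.trans_le hxl⟩ hlk.le).not_gt hlk

lemma recordValues_subset_Ioc [LocallyFiniteOrder α] {x : Fin n → α} {m : α} (hm : ∀ p, x p ≤ m)
    (i : Fin n) : recordValues x i ⊆ Ioc (x i) m := fun y hy => by
  obtain ⟨j, hj, rfl⟩ := mem_recordValues.1 hy
  obtain ⟨hij, hj_max⟩ := mem_recordsAfter.1 hj
  exact mem_Ioc.2 ⟨hj_max i le_rfl hij, hm j⟩

lemma tupleView_le {x : Fin n → ℕ} {m : ℕ} (hm : ∀ p, x p ≤ m) (i : Fin n) :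
    tupleView x i ≤ m - x i := by
  simpa only [card_recordValues, Nat.card_Ioc] using card_le_card (recordValues_subset_Ioc hm i)

-- A view as large as the maximum `m` forces every value in `(0, m]` to be a record.
lemma exists_eq_and_tupleView_eq {x : Fin n → ℕ} {m : ℕ} {i : Fin n} (hm : ∀ p, x p ≤ m)
    (hi : tupleView x i = m) {k : ℕ} (hk : k ≤ m) : ∃ j, x j = k ∧ tupleView x j = m - k := by
  have hxi : x i = 0 := by
    have := tupleView_le hm i
    have := hm i
    omega
  have hvalues : recordValues x i = Ioc 0 m := by
    refine eq_of_subset_of_card_le (hxi ▸ recordValues_subset_Ioc hm i) ?_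
    rw [card_recordValues, hi, Nat.card_Ioc, Nat.sub_zero]
  rcases Nat.eq_zero_or_pos k with rfl | hk_pos
  · exact ⟨i, hxi, hi⟩
  · obtain ⟨j, hj, rfl⟩ := mem_recordValues.1 (hvalues ▸ mem_Ioc.2 ⟨hk_pos, hk⟩)
    refine ⟨j, rfl, ?_⟩
    have hvalues_j : recordValues x j = Ioc (x j) m := by
      ext y
      simp only [recordValues_of_mem_recordsAfter hj, hvalues, mem_filter, mem_Ioc]
      omega
    rw [← card_recordValues, hvalues_j, Nat.card_Ioc]

lemma tupleView_comp {f : α → β} (hf : StrictMono f) (x : Fin n → α) :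
    tupleView (f ∘ x) = tupleView x := by
  funext i
  simp only [tupleView, recordsAfter, Function.comp_apply, hf.lt_iff_lt]

end Records

section Blocks

variable {n m : ℕ} {x g : Fin n → ℕ}

/-- The tuple `x` is cut into consecutive blocks numbered `0, …, m`, where position `p` lies in
block `g p`, and the maximal entry of block `k` is `k`. -/
structure IsBlocking (x g : Fin n → ℕ) (m : ℕ) : Prop where
  monotone : Monotone g
  le_block : ∀ p, x p ≤ g p
  block_le : ∀ p, g p ≤ m
  exists_eq : ∀ k ≤ m, ∃ p, x p = k ∧ g p = k

/-- A blocking of `x` such that `x` is weakly decreasing on each block. -/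
structure IsAntitoneBlocking (x g : Fin n → ℕ) (m : ℕ) : Prop extends IsBlocking x g m where
  antitoneOn : ∀ k, AntitoneOn x (g ⁻¹' {k})

lemma IsBlocking.Ioc_subset_recordValues (h : IsBlocking x g m) (p : Fin n) :
    Ioc (g p) m ⊆ recordValues x p := fun k hk => by
  obtain ⟨hpk, hkm⟩ := mem_Ioc.1 hk
  obtain ⟨q, ⟨hxq, hgq⟩, hq_min⟩ := exists_minimal_of_wellFoundedLT _ (h.exists_eq k hkm)
  refine mem_recordValues.2 ⟨q, mem_recordsAfter.2 ⟨?_, fun l _ hlq => ?_⟩, hxq⟩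
  · by_contra! hqp
    have := h.monotone hqp
    omega
  · have hgl := h.monotone hlq.le
    have hxl := h.le_block l
    by_contra!
    exact (hq_min ⟨by omega, by omega⟩ hlq.le).not_gt hlq

lemma IsBlocking.sub_le_tupleView (h : IsBlocking x g m) (p : Fin n) :
    m - g p ≤ tupleView x p := by
  simpa only [card_recordValues, Nat.card_Ioc] using card_le_card (h.Ioc_subset_recordValues p)

lemma IsBlocking.isAntitoneBlocking (h : IsBlocking x g m)
    (hview : ∀ p, tupleView x p ≤ m - g p) : IsAntitoneBlocking x g m := by
  refine ⟨h, fun k p hp q hq hpq => ?_⟩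
  by_contra! hx
  obtain ⟨j, hj, hjq⟩ := exists_mem_recordsAfter_le hpq hx
  have hvalues : Ioc (g p) m = recordValues x p :=
    eq_of_subset_of_card_le (h.Ioc_subset_recordValues p) <| by
      simpa only [card_recordValues, Nat.card_Ioc] using hview p
  have hpj : g p < x j :=
    (mem_Ioc.1 (hvalues ▸ mem_recordValues.2 ⟨j, hj, rfl⟩)).1
  have hjp : x j ≤ g p :=
    calc x j ≤ g j := h.le_block j
      _ ≤ g q := h.monotone hjq
      _ = g p := hq.trans hp.symm
  exact hpj.not_ge hjp

lemma IsAntitoneBlocking.recordValues_subset (h : IsAntitoneBlocking x g m) (p : Fin n) :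
    recordValues x p ⊆ Ioc (g p) m := fun y hy => by
  obtain ⟨j, hj, rfl⟩ := mem_recordValues.1 hy
  obtain ⟨hpj, hj_max⟩ := mem_recordsAfter.1 hj
  have hg_lt : g p < g j := (h.monotone hpj.le).lt_of_ne fun hg =>
    (h.antitoneOn _ hg rfl hpj.le).not_gt (hj_max p le_rfl hpj)
  obtain ⟨q, hxq, hgq⟩ := h.exists_eq (g j) (h.block_le j)
  have hpq : p < q := h.monotone.reflect_lt (hgq ▸ hg_lt)
  have hgx : g j ≤ x j := by
    rcases le_or_gt j q with hjq | hqj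
    · exact hxq ▸ h.antitoneOn _ rfl hgq hjq
    · exact hxq ▸ (hj_max q hpq.le hqj).le
  exact mem_Ioc.2 ⟨hg_lt.trans_le hgx, (h.le_block j).trans (h.block_le j)⟩

lemma IsAntitoneBlocking.tupleView_eq (h : IsAntitoneBlocking x g m) (p : Fin n) :
    tupleView x p = m - g p := by
  rw [← card_recordValues, (h.recordValues_subset p).antisymm (h.Ioc_subset_recordValues p),
    Nat.card_Ioc]

lemma IsBlocking.apply_le (h : IsBlocking x g m) (p : Fin n) : x p ≤ m :=
  (h.le_block p).trans (h.block_le p)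

end Blocks

section Panorama

variable {α β : Type*} [LinearOrder α] [LinearOrder β] {n m : ℕ}

/-- The permutation listing the positions of `x` by weakly decreasing entry, positions with equal
entries in increasing order. -/
def sortDesc (x : Fin n → α) : Equiv.Perm (Fin n) :=
  Tuple.sort (toDual ∘ x)

/-- The panorama of a sequence encoded as a tuple rather than a list. -/
def tuplePan (x : Fin n → α) : Fin n → ℕ :=
  tupleView x ∘ sortDesc x

lemma eq_sortDesc_iff {x : Fin n → α} {σ : Equiv.Perm (Fin n)} :
    σ = sortDesc x ↔ Antitone (x ∘ σ) ∧ ∀ s t, s < t → x (σ s) = x (σ t) → σ s < σ t :=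
  Tuple.eq_sort_iff

lemma antitone_comp_sortDesc (x : Fin n → α) : Antitone (x ∘ sortDesc x) :=
  (eq_sortDesc_iff.1 rfl).1

lemma sortDesc_lt_sortDesc {x : Fin n → α} {s t : Fin n} (hst : s < t)
    (hx : x (sortDesc x s) = x (sortDesc x t)) : sortDesc x s < sortDesc x t :=
  (eq_sortDesc_iff.1 rfl).2 s t hst hx

lemma sortDesc_comp {f : α → β} (hf : StrictMono f) (x : Fin n → α) :
    sortDesc (f ∘ x) = sortDesc x :=
  (eq_sortDesc_iff.2 ⟨hf.monotone.comp_antitone (antitone_comp_sortDesc x),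
    fun _ _ hst hx => sortDesc_lt_sortDesc hst (hf.injective hx)⟩).symm

lemma tuplePan_comp {f : α → β} (hf : StrictMono f) (x : Fin n → α) :
    tuplePan (f ∘ x) = tuplePan x := by
  rw [tuplePan, tuplePan, tupleView_comp hf, sortDesc_comp hf]

lemma sum_tuplePan (x : Fin n → α) : ∑ s, tuplePan x s = ∑ p, tupleView x p :=
  Equiv.sum_comp (sortDesc x) (tupleView x)

lemma isBlocking_tuplePan {x : Fin n → ℕ} {i : Fin n} (hm : ∀ p, x p ≤ m)
    (hi : tupleView x i = m) : IsBlocking (tuplePan x) (fun s => m - x (sortDesc x s)) m where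
  monotone _ _ hst := Nat.sub_le_sub_left (antitone_comp_sortDesc x hst) m
  le_block s := tupleView_le hm (sortDesc x s)
  block_le s := Nat.sub_le _ _
  exists_eq k hk := by
    obtain ⟨j, hxj, hview⟩ := exists_eq_and_tupleView_eq hm hi (Nat.sub_le m k)
    obtain ⟨s, rfl⟩ := (sortDesc x).surjective j
    exact ⟨s, hview.trans (Nat.sub_sub_self hk), by rw [hxj, Nat.sub_sub_self hk]⟩

variable {x g : Fin n → ℕ}

lemma isAntitoneBlocking_tuplePan (h : IsAntitoneBlocking x g m) :
    IsAntitoneBlocking (tuplePan x) (fun s => m - x (sortDesc x s)) m := by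
  obtain ⟨i, -, hgi⟩ := h.exists_eq 0 (Nat.zero_le m)
  have hi : tupleView x i = m := by rw [h.tupleView_eq, hgi, Nat.sub_zero]
  refine ⟨isBlocking_tuplePan h.apply_le hi, fun k s hs t ht hst => ?_⟩
  rcases hst.eq_or_lt with rfl | hst
  · rfl
  have hx : x (sortDesc x s) = x (sortDesc x t) :=
    (tsub_right_inj (h.apply_le _) (h.apply_le _)).1 (hs.trans ht.symm)
  change tupleView x _ ≤ tupleView x _
  rw [h.tupleView_eq, h.tupleView_eq]
  exact Nat.sub_le_sub_left (h.monotone (sortDesc_lt_sortDesc hst hx).le) m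

lemma sortDesc_tuplePan (h : IsAntitoneBlocking x g m) :
    sortDesc (tuplePan x) = (sortDesc x).symm := by
  have hcomp : tuplePan x ∘ (sortDesc x).symm = fun p => m - g p := by
    funext p
    simp only [tuplePan, Function.comp_apply, Equiv.apply_symm_apply, h.tupleView_eq]
  refine (eq_sortDesc_iff.2 ⟨?_, fun p q hpq hpan => ?_⟩).symm
  · rw [hcomp]
    exact fun p q hpq => Nat.sub_le_sub_left (h.monotone hpq) m
  · have hg : g p = g q := (tsub_right_inj (h.block_le p) (h.block_le q)).1 <|
      (congr_fun hcomp p).symm.trans (hpan.trans (congr_fun hcomp q))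
    have hx : x q ≤ x p := h.antitoneOn _ hg rfl hpq.le
    by_contra! hle
    rcases hle.eq_or_lt with heq | hlt
    · exact hpq.ne' ((sortDesc x).symm.injective heq)
    · have hx' := antitone_comp_sortDesc x hlt.le
      have hqp := sortDesc_lt_sortDesc (x := x) hlt
      simp only [Function.comp_apply, Equiv.apply_symm_apply] at hx' hqp
      exact (hqp (hx.antisymm hx')).not_gt hpq

lemma tuplePan_tuplePan (h : IsAntitoneBlocking x g m) :
    tuplePan (tuplePan x) = x := by
  funext p
  calc tuplePan (tuplePan x) p
    _ = tupleView (tuplePan x) ((sortDesc x).symm p) := by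
        rw [tuplePan, Function.comp_apply, sortDesc_tuplePan h]
    _ = m - (m - x p) := by
        rw [(isAntitoneBlocking_tuplePan h).tupleView_eq, Equiv.apply_symm_apply]
    _ = x p := Nat.sub_sub_self (h.apply_le p)

-- The views of `x` are bounded below by the entries of a rearrangement of `tuplePan x`, and both
-- have the same sum, so the bound is an equality.
lemma exists_isAntitoneBlocking_of_tuplePan_tuplePan [NeZero n]
    (h : tuplePan (tuplePan x) = x) : ∃ g m, IsAntitoneBlocking x g m := by
  obtain ⟨p₀, hp₀⟩ := Finite.exists_max x
  set y := tuplePan x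
  have hy_le : ∀ p, y p ≤ x p₀ := fun p => (tupleView_le hp₀ _).trans (Nat.sub_le _ _)
  have hview : tupleView y (sortDesc y p₀) = x p₀ := congr_fun h p₀
  have hblock : IsBlocking x (fun s => x p₀ - y (sortDesc y s)) (x p₀) :=
    h.subst (motive := (IsBlocking · _ _)) (isBlocking_tuplePan hy_le hview)
  have hle : ∀ p, y (sortDesc y p) ≤ tupleView x p := fun p => by
    simpa only [Nat.sub_sub_self (hy_le _)] using hblock.sub_le_tupleView p
  have hsum : ∑ p, y (sortDesc y p) = ∑ p, tupleView x p :=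
    (Equiv.sum_comp _ y).trans (sum_tuplePan x)
  have heq := (sum_eq_sum_iff_of_le fun p _ => hle p).1 hsum
  refine ⟨_, _, hblock.isAntitoneBlocking fun p => ?_⟩
  rw [Nat.sub_sub_self (hy_le _), heq p (mem_univ p)]

lemma tuplePan_tuplePan_eq_self_iff [NeZero n] :
    tuplePan (tuplePan x) = x ↔ ∃ g m, IsAntitoneBlocking x g m :=
  ⟨exists_isAntitoneBlocking_of_tuplePan_tuplePan, fun ⟨_, _, h⟩ => tuplePan_tuplePan h⟩

end Panorama

section SelfModified

lemma getD_ofFn {α : Type*} {n : ℕ} (x : Fin n → α) (i : Fin n) (d : α) :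
    (List.ofFn x).getD i d = x i := by
  rw [List.getD_eq_getElem _ _ (by rw [List.length_ofFn]; exact i.isLt), List.getElem_ofFn]

lemma take_add_one_ofFn {α : Type*} {n : ℕ} (x : Fin n → α) (i : Fin n) :
    (List.ofFn x).take (i + 1) = (List.ofFn x).take i ++ [x i] := by
  rw [List.take_succ_eq_append_getElem (by rw [List.length_ofFn]; exact i.isLt),
    List.getElem_ofFn]

lemma ascents_cons_cons (a b : ℕ) (l : List ℕ) :
    ascents (a :: b :: l) = ascents (b :: l) + if a < b then 1 else 0 := by
  by_cases hab : a < b <;> simp [ascents, hab]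

lemma ascents_append_pair (l : List ℕ) (a b : ℕ) :
    ascents (l ++ [a, b]) = ascents (l ++ [a]) + if a < b then 1 else 0 := by
  induction l with
  | nil => exact ascents_cons_cons a b []
  | cons c l ih =>
    cases l with
    | nil =>
      simp only [List.cons_append, List.nil_append, ascents_cons_cons] at ih ⊢
      omega
    | cons d l =>
      simp only [List.cons_append, ascents_cons_cons] at ih ⊢
      omega

variable {n m : ℕ} {x g : Fin (n + 1) → ℕ}

/-- The number of ascents among the entries of `x` up to and including position `p`. -/
def ascentsUpTo (x : Fin (n + 1) → ℕ) (p : Fin (n + 1)) : ℕ :=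
  ascents ((List.ofFn x).take (p + 1))

lemma ascentsUpTo_zero (x : Fin (n + 1) → ℕ) : ascentsUpTo x 0 = 0 := by
  simp [ascentsUpTo, ascents]

lemma ascentsUpTo_succ (x : Fin (n + 1) → ℕ) (p : Fin n) :
    ascentsUpTo x p.succ =
      ascentsUpTo x p.castSucc + if x p.castSucc < x p.succ then 1 else 0 := by
  have htake : (List.ofFn x).take (p.succ + 1) =
      (List.ofFn x).take p.castSucc ++ [x p.castSucc, x p.succ] := by
    rw [take_add_one_ofFn, Fin.val_succ, ← Fin.val_castSucc, take_add_one_ofFn,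
      List.append_assoc, List.singleton_append]
  rw [ascentsUpTo, ascentsUpTo, htake, take_add_one_ofFn, ascents_append_pair]

lemma selfModified_ofFn_iff :
    SelfModified (List.ofFn x) ↔ x 0 = 0 ∧
      ∀ p : Fin n, x p.succ ≤ ascentsUpTo x p.castSucc + 1 ∧
        (x p.succ ≤ x p.castSucc ∨ x p.succ = ascentsUpTo x p.castSucc + 1) := by
  have hindex (P : ℕ → Prop) :
      (∀ k < (List.ofFn x).length, 0 < k → P k) ↔ ∀ p : Fin n, P p.succ := by
    rw [List.length_ofFn]
    refine ⟨fun h p => h _ p.succ.isLt (Nat.succ_pos _), fun h k hk hk0 => ?_⟩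
    obtain ⟨k, rfl⟩ := Nat.exists_eq_succ_of_ne_zero hk0.ne'
    exact h ⟨k, Nat.lt_of_succ_lt_succ hk⟩
  have hpred (p : Fin n) : (p.succ : ℕ) - 1 = p.castSucc := rfl
  rw [SelfModified, IsAscSeq, hindex, hindex, and_assoc, ← forall_and]
  simp only [hpred, getD_ofFn]
  exact Iff.and (by rw [← getD_ofFn x 0 0]; rfl) Iff.rfl

lemma monotone_ascentsUpTo (x : Fin (n + 1) → ℕ) : Monotone (ascentsUpTo x) :=
  Fin.monotone_iff_le_succ.2 fun p => by
    rw [ascentsUpTo_succ]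
    exact Nat.le_add_right _ _

lemma exists_eq_and_ascentsUpTo_eq (h0 : x 0 = 0)
    (hstep : ∀ p : Fin n, x p.succ ≤ x p.castSucc ∨ x p.succ = ascentsUpTo x p.castSucc + 1)
    (p : Fin (n + 1)) {k : ℕ} (hk : k ≤ ascentsUpTo x p) :
    ∃ q, x q = k ∧ ascentsUpTo x q = k := by
  induction p using Fin.induction with
  | zero =>
    have hk0 : k = 0 := by rwa [ascentsUpTo_zero, Nat.le_zero] at hk
    exact ⟨0, h0.trans hk0.symm, (ascentsUpTo_zero x).trans hk0.symm⟩
  | succ p ih =>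
    rcases le_or_gt k (ascentsUpTo x p.castSucc) with hle | hlt
    · exact ih hle
    · refine ⟨p.succ, ?_⟩
      have hasc := ascentsUpTo_succ x p
      have := hstep p
      split_ifs at hasc <;> omega

lemma antitoneOn_ascentsUpTo_fiber (x : Fin (n + 1) → ℕ) (k : ℕ) :
    AntitoneOn x (ascentsUpTo x ⁻¹' {k}) := by
  intro p hp q hq hpq
  induction q using Fin.induction with
  | zero => rw [Fin.le_zero_iff.1 hpq]
  | succ q ih =>
    rcases hpq.eq_or_lt with rfl | hlt
    · rfl
    have hpq : p ≤ q.castSucc := Fin.le_castSucc_iff.2 hlt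
    have hmono_p : ascentsUpTo x p ≤ ascentsUpTo x q.castSucc := monotone_ascentsUpTo x hpq
    have hmono_q : ascentsUpTo x q.castSucc ≤ ascentsUpTo x q.succ :=
      monotone_ascentsUpTo x q.castSucc_le_succ
    rw [Set.mem_preimage, Set.mem_singleton_iff] at hp hq
    have hasc := ascentsUpTo_succ x q
    have hxq : x q.succ ≤ x q.castSucc := by
      by_contra! hlt
      rw [if_pos hlt] at hasc
      omega
    exact hxq.trans (ih (show _ = k by omega) hpq)

lemma le_ascentsUpTo (h0 : x 0 = 0)
    (hbound : ∀ p : Fin n, x p.succ ≤ ascentsUpTo x p.castSucc + 1) (p : Fin (n + 1)) :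
    x p ≤ ascentsUpTo x p := by
  induction p using Fin.induction with
  | zero => exact h0.trans_le (Nat.zero_le _)
  | succ p ih =>
    have := hbound p
    rw [ascentsUpTo_succ]
    split_ifs <;> omega

lemma SelfModified.isAntitoneBlocking (h : SelfModified (List.ofFn x)) :
    IsAntitoneBlocking x (ascentsUpTo x) (ascentsUpTo x (Fin.last n)) := by
  obtain ⟨h0, hstep⟩ := selfModified_ofFn_iff.1 h
  exact
    { monotone := monotone_ascentsUpTo x
      le_block := le_ascentsUpTo h0 fun p => (hstep p).1
      block_le := fun p => monotone_ascentsUpTo x (Fin.le_last p)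
      exists_eq := fun k hk => exists_eq_and_ascentsUpTo_eq h0 (fun p => (hstep p).2) _ hk
      antitoneOn := antitoneOn_ascentsUpTo_fiber x }

lemma IsBlocking.block_zero (h : IsBlocking x g m) : g 0 = 0 := by
  obtain ⟨p, -, hp⟩ := h.exists_eq 0 (Nat.zero_le m)
  exact Nat.le_zero.1 ((h.monotone (Fin.zero_le p)).trans_eq hp)

-- Block `g p + 1` is nonempty and starts with its maximum, so a new block can only start with an
-- ascent to `g p + 1`.
lemma IsAntitoneBlocking.step (h : IsAntitoneBlocking x g m) (p : Fin n) :
    (x p.succ ≤ x p.castSucc ∧ g p.succ = g p.castSucc) ∨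
      (x p.succ = g p.castSucc + 1 ∧ g p.succ = g p.castSucc + 1) := by
  rcases (h.monotone p.castSucc_le_succ).eq_or_lt with heq | hlt
  · exact Or.inl ⟨h.antitoneOn _ rfl heq.symm p.castSucc_le_succ, heq.symm⟩
  · obtain ⟨q, hxq, hgq⟩ := h.exists_eq (g p.castSucc + 1) (hlt.trans_le (h.block_le _))
    have hpq : p.succ ≤ q :=
      Fin.castSucc_lt_iff_succ_le.1 (h.monotone.reflect_lt (hgq ▸ Nat.lt_succ_self _))
    have hg : g p.succ = g p.castSucc + 1 := le_antisymm (hgq ▸ h.monotone hpq) hlt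
    refine Or.inr ⟨le_antisymm (hg ▸ h.le_block _) ?_, hg⟩
    exact hxq ▸ h.antitoneOn _ hg hgq hpq

lemma IsAntitoneBlocking.ascentsUpTo_eq (h : IsAntitoneBlocking x g m) (p : Fin (n + 1)) :
    ascentsUpTo x p = g p := by
  induction p using Fin.induction with
  | zero => rw [ascentsUpTo_zero, h.block_zero]
  | succ p ih =>
    have := h.step p
    have := h.le_block p.castSucc
    rw [ascentsUpTo_succ, ih]
    split_ifs <;> omega

lemma IsAntitoneBlocking.selfModified (h : IsAntitoneBlocking x g m) :
    SelfModified (List.ofFn x) := by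
  refine selfModified_ofFn_iff.2 ⟨Nat.le_zero.1 ((h.le_block 0).trans_eq h.block_zero), fun p => ?_⟩
  have := h.step p
  have := h.le_block p.castSucc
  rw [h.ascentsUpTo_eq]
  omega

end SelfModified

section Lists

variable {α β : Type*} [LinearOrder α] [LinearOrder β] [Inhabited α] [Inhabited β] {n : ℕ}

lemma view_ofFn (x : Fin n → α) (i : Fin n) : view (List.ofFn x) i = tupleView x i := by
  have hrecord (j : Fin n) :
      ((i : ℕ) < j ∧ ∀ k < (j : ℕ), (i : ℕ) ≤ k →
        (List.ofFn x).getD k default < (List.ofFn x).getD j default) ↔ j ∈ recordsAfter x i := by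
    rw [mem_recordsAfter]
    refine and_congr Iff.rfl ⟨fun h k hik hkj => ?_, fun h k hkj hik => ?_⟩
    · simpa only [getD_ofFn] using h k hkj hik
    · lift k to Fin n using hkj.trans j.isLt
      simpa only [getD_ofFn] using h k hik hkj
  rw [view, List.length_ofFn, ← List.map_coe_finRange_eq_range, List.filter_map, List.length_map]
  simp only [Function.comp_def, hrecord]
  rw [← List.toFinset_card_of_nodup ((List.nodup_finRange n).filter _), List.toFinset_filter,
    List.toFinset_finRange]
  simp only [decide_eq_true_eq, filter_univ_mem, tupleView]

lemma mergeSort_range_ofFn (x : Fin n → α) :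
    (List.range n).mergeSort (fun i j =>
      decide ((List.ofFn x).getD j default < (List.ofFn x).getD i default ∨
        ((List.ofFn x).getD i default = (List.ofFn x).getD j default ∧ i ≤ j))) =
      List.ofFn fun s => (sortDesc x s : ℕ) := by
  have hperm : (List.ofFn fun s => (sortDesc x s : ℕ)).Perm (List.range n) := by
    rw [← List.map_coe_finRange_eq_range, ← List.ofFn_eq_map]
    exact (sortDesc x).ofFn_comp_perm Fin.val
  let key (i : ℕ) : αᵒᵈ ×ₗ ℕ := toLex (toDual ((List.ofFn x).getD i default), i)
  have hkey (i j : ℕ) : ((List.ofFn x).getD j default < (List.ofFn x).getD i default ∨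
      ((List.ofFn x).getD i default = (List.ofFn x).getD j default ∧ i ≤ j)) ↔
        key i ≤ key j := by
    rw [Prod.Lex.toLex_le_toLex, toDual_lt_toDual, toDual_inj]
  simp only [hkey]
  refine ((List.mergeSort_perm _ _).trans hperm.symm).eq_of_pairwise
    (le := fun i j => key i ≤ key j) (fun i j _ _ hij hji => ?_) ?_ (List.pairwise_ofFn.2 ?_)
  · exact congr_arg (fun k => (ofLex k).2) (hij.antisymm hji)
  · simpa only [decide_eq_true_eq] using List.pairwise_mergeSort
      (le := fun i j => decide (key i ≤ key j))
      (fun _ _ _ => by simpa only [decide_eq_true_eq] using le_trans)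
      (fun i j => by simpa only [Bool.or_eq_true, decide_eq_true_eq] using le_total _ _)
      (List.range n)
  · intro s t hst
    rw [← hkey, getD_ofFn, getD_ofFn]
    exact (antitone_comp_sortDesc x hst.le).lt_or_eq.imp_right fun hx =>
      ⟨hx.symm, (sortDesc_lt_sortDesc hst hx.symm).le⟩

lemma pan_ofFn (x : Fin n → α) : pan (List.ofFn x) = List.ofFn (tuplePan x) := by
  rw [pan, List.length_ofFn, mergeSort_range_ofFn, List.map_ofFn, List.ofFn_inj]
  funext s
  exact view_ofFn x (sortDesc x s)

lemma pan_map {f : α → β} (hf : StrictMono f) (a : List α) : pan (a.map f) = pan a := by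
  rw [← List.ofFn_get a, List.map_ofFn, pan_ofFn, pan_ofFn, tuplePan_comp hf]

end Lists

theorem pan_pan_eq_self_iff (a : List ℕ) : pan (pan a) = a ↔ SelfModified a := by
  obtain ⟨n, x, rfl⟩ : ∃ n, ∃ x : Fin n → ℕ, a = List.ofFn x := ⟨_, a.get, (List.ofFn_get a).symm⟩
  cases n with
  | zero => simp [pan, SelfModified, IsAscSeq]
  | succ n =>
    rw [pan_ofFn, pan_ofFn, List.ofFn_inj, tuplePan_tuplePan_eq_self_iff]
    exact ⟨fun ⟨_, _, h⟩ => h.selfModified, fun h => ⟨_, _, h.isAntitoneBlocking⟩⟩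

theorem pan_pan_eq_iff_selfModified_general {α : Type*} [LinearOrder α] [Inhabited α] {f : ℕ → α}
    (hf : StrictMono f) (a : List α) :
    (pan (pan a)).map f = a ↔ ∃ b : List ℕ, SelfModified b ∧ a = b.map f := by
  constructor
  · intro h
    refine ⟨pan (pan a), (pan_pan_eq_self_iff _).1 ?_, h.symm⟩
    calc pan (pan (pan (pan a))) = pan (pan ((pan (pan a)).map f)) := by rw [pan_map hf]
      _ = pan (pan a) := by rw [h]
  · rintro ⟨b, hb, rfl⟩
    rw [pan_map hf, (pan_pan_eq_self_iff b).2 hb]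

-- On the left, `n` ranges over `ℝ`: `l` itself is first coerced to a `List ℝ` through the list
-- monad, and then the identity is mapped over it.
lemma map_coe_eq_map_natCast (l : List ℕ) :
    l.map (fun n => (n : ℝ)) = List.map (Nat.cast : ℕ → ℝ) l := by
  simp only [List.pure_def, List.bind_eq_flatMap, List.map_eq_flatMap, List.flatMap_singleton']

theorem pan_pan_eq_iff_selfModified (a : List ℝ) :
    (pan (pan a)).map (fun n => (n : ℝ)) = a ↔
    ∃ b : List ℕ, SelfModified b ∧ a = b.map (fun n => (n : ℝ)) := by
  simpa only [map_coe_eq_map_natCast] using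
    pan_pan_eq_iff_selfModified_general Nat.strictMono_cast a
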